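/- arXiv:1702.02534 — 2 statements merged into one kernel-verified Lean document; each statement's English description precedes it below -/
import Mathlib

section
/- Discrete energy estimate: in the discrete upwind setting with N time steps, let q̄ ∈ (1,2] and κ > 1. Suppose ρ⁰_K ≥ 0 and fⁿ_K ≥ 0 for all K and n, let ρⁿ⁺¹ solve one step of the implicit upwind scheme with data ρⁿ, fⁿ, fluxes uⁿ and time step δ > 0 for each n ∈ {0,…,N−1}, set λⁿ := δ · max_K ((div uⁿ)_K)⁻ and Λ := exp(Σ_n λⁿ), and assume ((q̄−1)/q̄) λⁿ ≤ (κ−1)/κ for every n. Then there is a constant C depending only on q̄ such that Σ_{n=0}^{N−1} Σ_K |K| ((ρⁿ⁺¹_K+ρⁿ_K)/2)^{q̄−2} (ρⁿ⁺¹_K−ρⁿ_K)² + δ Σ_{n=0}^{N−1} Σ_K Σ_{L≠K} |K∣L| |uⁿ_{KL}| ((ρⁿ⁺¹_K+ρⁿ⁺¹_L)/2)^{q̄−2} (ρⁿ⁺¹_K−ρⁿ⁺¹_L)² ≤ C · Λ^{κ(q̄−1)} (1 + Σ_n λⁿ) ( ‖ρ⁰‖_{ℓ^{q̄}} + Σ_n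 δ ‖fⁿ‖_{ℓ^{q̄}} )^{q̄}, where any summand whose two ρ-values are both zero is interpreted as 0. -/
open Finset
lemma flux_id {ι : Type} [Fintype ι] (q : ℝ) (hq : 1 < q) (p : ι → ι → ℝ) (r : ι → ℝ) (hr : ∀ K, 0 ≤ r K) :
    ∑ K, q * r K ^ (q-1) * ∑ L, (p K L * r K - p L K * r L)
     = (q-1) * ∑ K, (∑ L, (p K L - p L K)) * r K ^ q
      + ∑ K, ∑ L, p L K * (r L ^ q - r K ^ q - q * r K ^ (q-1) * (r L - r K)) := by
  have h0 : ∑ K, ∑ L, (p K L * r K ^ q - p L K * r L ^ q) = 0 := by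
    simp only [Finset.sum_sub_distrib]
    rw [sub_eq_zero, Finset.sum_comm]
  rw [← sub_eq_zero, ← h0]
  simp only [Finset.mul_sum, Finset.sum_mul, ← Finset.sum_add_distrib, ← Finset.sum_sub_distrib]
  refine Finset.sum_congr rfl fun K _ => Finset.sum_congr rfl fun L _ => ?_
  have : r K ^ q = r K ^ (q-1) * r K := by
    rw [← Real.rpow_add_one' (hr K) (by linarith)]; simp
  rw [this]; ring

lemma nonneg_step {ι : Type} [Fintype ι] (δ : ℝ) (hδ : 0 < δ) (vol : ι → ℝ) (hv : ∀ K, 0 < vol K)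
    (p : ι → ι → ℝ) (hp : ∀ K L, 0 ≤ p K L) (r s f : ι → ℝ) (hs : ∀ K, 0 ≤ s K) (hf : ∀ K, 0 ≤ f K)
    (h : ∀ K, vol K * (r K - s K) + δ * ∑ L, (p K L * r K - p L K * r L) = δ * (vol K * f K)) :
    ∀ K, 0 ≤ r K := by
  classical
  -- negative parts
  set m : ι → ℝ := fun K => max (- r K) 0 with hm
  have h0 : ∑ K, ∑ L, (p K L * m K - p L K * m L) = 0 := by
    simp only [Finset.sum_sub_distrib]
    rw [sub_eq_zero, Finset.sum_comm]
  have key : ∀ K, vol K * m K ≤ - (δ * ∑ L, (p K L * m K - p L K * m L)) := by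
    intro K
    rw [mul_sum, ← sum_neg_distrib]
    rcases le_or_gt 0 (r K) with hK | hK
    · have : m K = 0 := by simp [hm, hK]
      rw [this, mul_zero]
      apply sum_nonneg
      intro L _
      have h1 : 0 ≤ p L K * m L := mul_nonneg (hp _ _) (le_max_right _ _)
      nlinarith
    · have e : m K = - r K := by simp [hm, hK.le]
      have h1 : ∑ L, δ * (p K L * r K - p L K * r L) ≤ ∑ L, -(δ * (p K L * m K - p L K * m L)) := by
        apply sum_le_sum
        intro L _
        have h2 : - r L ≤ m L := le_max_left _ _
        have h3 := mul_le_mul_of_nonneg_left h2 (hp L K)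
        rw [e]
        nlinarith
      have h4 := h K
      rw [mul_sum] at h4
      have h5 : 0 ≤ vol K * s K := mul_nonneg (hv K).le (hs K)
      have h6 : 0 ≤ δ * (vol K * f K) := mul_nonneg hδ.le (mul_nonneg (hv K).le (hf K))
      rw [e] at h1 ⊢
      nlinarith
  have hsum := sum_le_sum fun K (_ : K ∈ univ) => key K
  rw [sum_neg_distrib, ← mul_sum, h0] at hsum
  simp only [mul_zero, neg_zero] at hsum
  have hnn : ∀ K ∈ univ, 0 ≤ vol K * m K := fun K _ => mul_nonneg (hv K).le (le_max_right _ _)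
  have := (sum_eq_zero_iff_of_nonneg hnn).1 (le_antisymm hsum (sum_nonneg hnn))
  intro K
  have h1 := this K (mem_univ K)
  rcases mul_eq_zero.1 h1 with h2 | h2
  · exact absurd h2 (hv K).ne'
  · have : - r K ≤ m K := le_max_left _ _
    linarith

lemma energy_step {ι : Type} [Fintype ι] (q : ℝ) (hq : 1 < q) (δ lam : ℝ) (vol : ι → ℝ)
    (p : ι → ι → ℝ) (r s f : ι → ℝ) (hr : ∀ K, 0 ≤ r K)
    (h : ∀ K, vol K * (r K - s K) + δ * ∑ L, (p K L * r K - p L K * r L) = δ * (vol K * f K))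
    (hd : ∀ K, - (δ * ∑ L, (p K L - p L K)) ≤ lam * vol K) :
    (∑ K, vol K * r K ^ q - ∑ K, vol K * s K ^ q)
      + ∑ K, vol K * (s K ^ q - r K ^ q - q * r K ^ (q-1) * (s K - r K))
      + δ * ∑ K, ∑ L, p L K * (r L ^ q - r K ^ q - q * r K ^ (q-1) * (r L - r K))
    ≤ q * δ * (∑ K, vol K * f K * r K ^ (q-1)) + (q-1) * lam * ∑ K, vol K * r K ^ q := by
  have h1 := flux_id q hq p r hr
  have h2 : ∑ K, q * r K ^ (q-1) * (vol K * (r K - s K)) + δ * ∑ K, q * r K ^ (q-1) * ∑ L, (p K L * r K - p L K * r L)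
     = q * δ * (∑ K, vol K * f K * r K ^ (q-1)) := by
    rw [mul_sum, mul_sum, ← sum_add_distrib]
    refine sum_congr rfl fun K _ => ?_
    have := h K
    linear_combination (q * r K ^ (q-1)) * this
  have h3 : (∑ K, vol K * r K ^ q - ∑ K, vol K * s K ^ q)
      + ∑ K, vol K * (s K ^ q - r K ^ q - q * r K ^ (q-1) * (s K - r K))
      = ∑ K, q * r K ^ (q-1) * (vol K * (r K - s K)) := by
    rw [← sum_sub_distrib, ← sum_add_distrib]
    refine sum_congr rfl fun K _ => ?_
    ring
  have h4 : -(δ * ∑ K, (∑ L, (p K L - p L K)) * r K ^ q) ≤ lam * ∑ K, vol K * r K ^ q := by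
    rw [mul_sum, mul_sum, ← sum_neg_distrib]
    apply sum_le_sum
    intro K _
    have := mul_le_mul_of_nonneg_right (hd K) (Real.rpow_nonneg (hr K) q)
    linarith
  have h5 := mul_le_mul_of_nonneg_left h4 (by linarith : 0 ≤ q - 1)
  rw [h3]
  rw [h1] at h2
  linarith

lemma bregman (q : ℝ) (hq : 1 < q) (hq2 : q ≤ 2) (a b : ℝ) (ha : 0 ≤ a) (hb : 0 ≤ b) :
    q * (q-1) / 2 * 2 ^ (q-2) * (((a+b)/2) ^ (q-2) * (a-b)^2) ≤ b ^ q - a ^ q - q * a ^ (q-1) * (b - a) := by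
  rcases (add_nonneg ha hb).eq_or_lt with hm | hm
  · have ha0 : a = 0 := by linarith
    have hb0 : b = 0 := by linarith
    simp [ha0, hb0]
  have e : (2:ℝ) ^ (q-2) * ((a+b)/2) ^ (q-2) = (a+b) ^ (q-2) := by
    rw [← Real.mul_rpow (by norm_num) (by positivity)]; congr 1; ring
  set m := a + b with hmdef
  set M := m ^ (q-2) with hM
  have goal' : q * (q-1) / 2 * M * (a-b)^2 ≤ b ^ q - a ^ q - q * a ^ (q-1) * (b - a) := by
    set g : ℝ → ℝ := fun s => s ^ q - q * (q-1)/2 * M * s^2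
    set g' : ℝ → ℝ := fun s => q * s ^ (q-1) - q * (q-1) * M * s
    set g'' : ℝ → ℝ := fun s => q * ((q-1) * s ^ (q-1-1)) - q * (q-1) * M
    have d1 : ∀ s, HasDerivAt g (g' s) s := by
      intro s
      have h1 := Real.hasDerivAt_rpow_const (x := s) (p := q) (Or.inr hq.le)
      have h2 := (hasDerivAt_pow 2 s).const_mul (q * (q-1)/2 * M)
      refine (h1.sub h2).congr_deriv ?_
      simp only [g']; push_cast; ring
    have d2 : ∀ s, s ≠ 0 → HasDerivAt g' (g'' s) s := by
      intro s hs
      have h1 := (Real.hasDerivAt_rpow_const (x := s) (p := q-1) (Or.inl hs)).const_mul q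
      have h2 := (hasDerivAt_id s).const_mul (q * (q-1) * M)
      refine (h1.sub h2).congr_deriv ?_
      simp only [g'']; ring
    have hc : ConvexOn ℝ (Set.Icc 0 m) g := by
      apply convexOn_of_hasDerivWithinAt2_nonneg (f' := g') (f'' := g'') (convex_Icc _ _)
      · exact fun s _ => (d1 s).continuousAt.continuousWithinAt
      · exact fun s _ => (d1 s).hasDerivWithinAt
      · intro s hs
        rw [interior_Icc] at hs
        exact (d2 s hs.1.ne').hasDerivWithinAt
      · intro s hs
        rw [interior_Icc] at hs
        have : M ≤ s ^ (q-1-1) := by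
          rw [hM, show q-1-1 = q-2 by ring]
          exact Real.rpow_le_rpow_of_nonpos hs.1 hs.2.le (by linarith)
        have := mul_le_mul_of_nonneg_left this (by nlinarith : 0 ≤ q * (q-1))
        simp only [g'']; linarith
    have tang : g' a * (b - a) ≤ g b - g a := by
      have ma : a ∈ Set.Icc 0 m := ⟨ha, by linarith⟩
      have mb : b ∈ Set.Icc 0 m := ⟨hb, by linarith⟩
      rcases lt_trichotomy a b with hab | hab | hab
      · have := hc.le_slope_of_hasDerivAt ma mb hab (d1 a)
        rwa [slope_def_field, le_div_iff₀ (by linarith)] at this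
      · simp [hab]
      · have := hc.slope_le_of_hasDerivAt mb ma hab (d1 a)
        rw [slope_def_field, div_le_iff₀ (by linarith)] at this
        linarith
    have ea : a ^ (q-1) * a = a ^ q := by
      rw [← Real.rpow_add_one' ha (by linarith)]; simp
    simp only [g, g'] at tang
    linarith
  rw [← e] at goal'
  linarith

lemma holder {ι : Type} [Fintype ι] (q : ℝ) (hq : 1 < q) (vol f r : ι → ℝ) (hv : ∀ K, 0 < vol K)
    (hf : ∀ K, 0 ≤ f K) (hr : ∀ K, 0 ≤ r K) :
    ∑ K, vol K * f K * r K ^ (q-1) ≤ (∑ K, vol K * f K ^ q) ^ (1/q) * ((∑ K, vol K * r K ^ q) ^ (1/q)) ^ (q-1) := by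
  have hq0 : q ≠ 0 := by linarith
  have hq1 : q - 1 ≠ 0 := by linarith
  have hpq : q.HolderConjugate (q/(q-1)) := Real.HolderConjugate.conjExponent hq
  have := Real.inner_le_Lp_mul_Lq_of_nonneg univ hpq (f := fun K => vol K ^ (1/q) * f K)
    (g := fun K => vol K ^ ((q-1)/q) * r K ^ (q-1))
    (fun K _ => mul_nonneg (Real.rpow_nonneg (hv K).le _) (hf K))
    (fun K _ => mul_nonneg (Real.rpow_nonneg (hv K).le _) (Real.rpow_nonneg (hr K) _))
  have e1 : ∀ K, vol K ^ (1/q) * f K * (vol K ^ ((q-1)/q) * r K ^ (q-1)) = vol K * f K * r K ^ (q-1) := by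
    intro K
    have : vol K ^ (1/q) * vol K ^ ((q-1)/q) = vol K := by
      rw [← Real.rpow_add (hv K), show 1/q + (q-1)/q = 1 by field_simp; ring, Real.rpow_one]
    linear_combination (f K * r K ^ (q-1)) * this
  have e2 : ∀ K, (vol K ^ (1/q) * f K) ^ q = vol K * f K ^ q := by
    intro K
    rw [Real.mul_rpow (Real.rpow_nonneg (hv K).le _) (hf K), ← Real.rpow_mul (hv K).le,
      one_div_mul_cancel hq0, Real.rpow_one]
  have e3 : ∀ K, (vol K ^ ((q-1)/q) * r K ^ (q-1)) ^ (q/(q-1)) = vol K * r K ^ q := by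
    intro K
    rw [Real.mul_rpow (Real.rpow_nonneg (hv K).le _) (Real.rpow_nonneg (hr K) _), ← Real.rpow_mul (hv K).le,
      ← Real.rpow_mul (hr K), show (q-1)/q * (q/(q-1)) = 1 by field_simp, Real.rpow_one,
      show (q-1) * (q/(q-1)) = q by field_simp]
  simp only [e1, e2, e3] at this
  refine this.trans (le_of_eq ?_)
  rw [← Real.rpow_mul (sum_nonneg fun K _ => mul_nonneg (hv K).le (Real.rpow_nonneg (hr K) _))]
  congr 2
  field_simp

lemma multi_step {ι : Type} [Fintype ι] (q : ℝ) (hq : 1 < q) (hq2 : q ≤ 2) (κ δ : ℝ) (hκ : 1 < κ)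
    (hδ : 0 < δ) (vol : ι → ℝ) (hv : ∀ K, 0 < vol K) (p : ℕ → ι → ι → ℝ) (hp : ∀ n K L, 0 ≤ p n K L)
    (N : ℕ) (ρ f : ℕ → ι → ℝ) (h0 : ∀ K, 0 ≤ ρ 0 K) (hf : ∀ n K, 0 ≤ f n K) (lam : ℕ → ℝ)
    (hl : ∀ n, 0 ≤ lam n)
    (h : ∀ n < N, ∀ K, vol K * (ρ (n+1) K - ρ n K)
      + δ * ∑ L, (p n K L * ρ (n+1) K - p n L K * ρ (n+1) L) = δ * (vol K * f n K))
    (hd : ∀ n < N, ∀ K, - (δ * ∑ L, (p n K L - p n L K)) ≤ lam n * vol K)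
    (hlam : ∀ n < N, (q - 1)/q * lam n ≤ (κ - 1)/κ) :
    q * (q-1) / 2 * 2 ^ (q-2) * ((∑ n ∈ range N, ∑ K, vol K * (((ρ (n+1) K + ρ n K)/2) ^ (q - 2) * (ρ (n+1) K - ρ n K)^2))
      + δ * ∑ n ∈ range N, ∑ K, ∑ L, p n L K * (((ρ (n+1) K + ρ (n+1) L)/2) ^ (q - 2) * (ρ (n+1) K - ρ (n+1) L)^2))
    ≤ (1 + q) * (Real.exp (∑ n ∈ range N, lam n)) ^ (κ * (q - 1)) *
          (1 + ∑ n ∈ range N, lam n) *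
          ((∑ K, vol K * ρ 0 K ^ q) ^ (1/q) +
            ∑ n ∈ range N, δ * (∑ K, vol K * f n K ^ q) ^ (1/q)) ^ q := by
  have hq0 : 0 < q := by linarith
  have hρ : ∀ n ≤ N, ∀ K, 0 ≤ ρ n K := by
    intro n
    induction n with
    | zero => exact fun _ => h0
    | succ n ih =>
      intro hn
      exact nonneg_step δ hδ vol hv (p n) (hp n) _ _ (f n) (ih (by omega)) (hf n) (h n (by omega))
  set S : ℕ → ℝ := fun n => ∑ K, vol K * ρ n K ^ q with hS
  set X : ℕ → ℝ := fun n => (S n) ^ (1/q) with hX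
  set F : ℕ → ℝ := fun n => (∑ K, vol K * f n K ^ q) ^ (1/q) with hF
  have hS0 : ∀ n ≤ N, 0 ≤ S n := fun n hn =>
    sum_nonneg fun K _ => mul_nonneg (hv K).le (Real.rpow_nonneg (hρ n hn K) _)
  have hX0 : ∀ n ≤ N, 0 ≤ X n := fun n hn => Real.rpow_nonneg (hS0 n hn) _
  have hF0 : ∀ n, 0 ≤ F n := fun n => Real.rpow_nonneg
    (sum_nonneg fun K _ => mul_nonneg (hv K).le (Real.rpow_nonneg (hf n K) _)) _
  have hXS : ∀ n ≤ N, X n ^ q = S n := by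
    intro n hn
    simp only [hX]
    rw [← Real.rpow_mul (hS0 n hn), one_div_mul_cancel hq0.ne', Real.rpow_one]
  -- energy inequality
  have hE : ∀ n < N, q * (q-1) / 2 * 2 ^ (q-2) * ((∑ K, vol K * (((ρ (n+1) K + ρ n K)/2) ^ (q - 2) * (ρ (n+1) K - ρ n K)^2))
      + δ * ∑ K, ∑ L, p n L K * (((ρ (n+1) K + ρ (n+1) L)/2) ^ (q - 2) * (ρ (n+1) K - ρ (n+1) L)^2))
      ≤ S n - S (n+1) + q * (δ * F n) * X (n+1) ^ (q-1) + (q-1) * lam n * S (n+1) := by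
    intro n hn
    have e := energy_step q hq δ (lam n) vol (p n) (ρ (n+1)) (ρ n) (f n) (hρ _ hn) (h n hn) (hd n hn)
    have hh := holder q hq vol (f n) (ρ (n+1)) hv (hf n) (hρ _ hn)
    have hh' := mul_le_mul_of_nonneg_left hh (by positivity : 0 ≤ q * δ)
    have b1 : q * (q-1) / 2 * 2 ^ (q-2) * ∑ K, vol K * (((ρ (n+1) K + ρ n K)/2) ^ (q - 2) * (ρ (n+1) K - ρ n K)^2)
      ≤ ∑ K, vol K * (ρ n K ^ q - ρ (n+1) K ^ q - q * ρ (n+1) K ^ (q-1) * (ρ n K - ρ (n+1) K)) := by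
      rw [mul_sum]
      refine sum_le_sum fun K _ => ?_
      have := mul_le_mul_of_nonneg_left (bregman q hq hq2 _ _ (hρ (n+1) hn K) (hρ n hn.le K)) (hv K).le
      linarith
    have b2 : q * (q-1) / 2 * 2 ^ (q-2) * ∑ K, ∑ L, p n L K * (((ρ (n+1) K + ρ (n+1) L)/2) ^ (q - 2) * (ρ (n+1) K - ρ (n+1) L)^2)
      ≤ ∑ K, ∑ L, p n L K * (ρ (n+1) L ^ q - ρ (n+1) K ^ q - q * ρ (n+1) K ^ (q-1) * (ρ (n+1) L - ρ (n+1) K)) := by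
      rw [mul_sum]
      refine sum_le_sum fun K _ => ?_
      rw [mul_sum]
      refine sum_le_sum fun L _ => ?_
      have := mul_le_mul_of_nonneg_left (bregman q hq hq2 _ _ (hρ (n+1) hn K) (hρ (n+1) hn L)) (hp n L K)
      linarith
    have b2' := mul_le_mul_of_nonneg_left b2 hδ.le
    simp only [hS, hX, hF]
    linarith
  -- norm growth
  have hG : ∀ n < N, X (n+1) * (1 - (q-1)/q * lam n) ≤ X n + δ * F n := by
    intro n hn
    have e := energy_step q hq δ (lam n) vol (p n) (ρ (n+1)) (ρ n) (f n) (hρ _ hn) (h n hn) (hd n hn)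
    have hh := holder q hq vol (f n) (ρ (n+1)) hv (hf n) (hρ _ hn)
    have hh2 := holder q hq vol (ρ n) (ρ (n+1)) hv (hρ n hn.le) (hρ _ hn)
    have hh' := mul_le_mul_of_nonneg_left hh (by positivity : 0 ≤ q * δ)
    have hh2' := mul_le_mul_of_nonneg_left hh2 hq0.le
    have b2 : 0 ≤ ∑ K, ∑ L, p n L K * (ρ (n+1) L ^ q - ρ (n+1) K ^ q - q * ρ (n+1) K ^ (q-1) * (ρ (n+1) L - ρ (n+1) K)) := by
      refine sum_nonneg fun K _ => sum_nonneg fun L _ => mul_nonneg (hp n L K) ?_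
      refine le_trans ?_ (bregman q hq hq2 _ _ (hρ (n+1) hn K) (hρ (n+1) hn L))
      have := hρ (n+1) hn K
      have := hρ (n+1) hn L
      have : 0 < q - 1 := by linarith
      positivity
    have b2' := mul_nonneg hδ.le b2
    have b1 : (∑ K, vol K * ρ (n+1) K ^ q - ∑ K, vol K * ρ n K ^ q)
      + ∑ K, vol K * (ρ n K ^ q - ρ (n+1) K ^ q - q * ρ (n+1) K ^ (q-1) * (ρ n K - ρ (n+1) K))
      = q * (∑ K, vol K * ρ (n+1) K ^ q) - q * ∑ K, vol K * ρ n K * ρ (n+1) K ^ (q-1) := by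
      rw [mul_sum, mul_sum, ← sum_sub_distrib, ← sum_sub_distrib, ← sum_add_distrib]
      refine sum_congr rfl fun K _ => ?_
      have ea : ρ (n+1) K ^ q = ρ (n+1) K ^ (q-1) * ρ (n+1) K := by
        rw [← Real.rpow_add_one' (hρ _ hn K) (by linarith)]; simp
      rw [ea]; ring
    rw [b1] at e
    have e' : q * S (n+1) - (q-1) * lam n * S (n+1) ≤ q * (X n * X (n+1) ^ (q-1)) + q * δ * (F n * X (n+1) ^ (q-1)) := by
      simp only [hS, hX, hF]
      linarith
    rw [← hXS (n+1) hn] at e'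
    have ea : X (n+1) ^ q = X (n+1) ^ (q-1) * X (n+1) := by
      rw [← Real.rpow_add_one' (hX0 _ hn) (by linarith)]; simp
    rw [ea] at e'
    rcases (hX0 (n+1) hn).eq_or_lt with hz | hz
    · rw [← hz, zero_mul]
      exact add_nonneg (hX0 n hn.le) (mul_nonneg hδ.le (hF0 n))
    · have hpos : 0 < q * X (n+1) ^ (q-1) := mul_pos hq0 (Real.rpow_pos_of_pos hz _)
      refine le_of_mul_le_mul_left ?_ hpos
      have : q * X (n+1) ^ (q-1) * (X (n+1) * (1 - (q-1)/q * lam n))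
        = q * (X (n+1) ^ (q-1) * X (n+1)) - (q-1) * lam n * (X (n+1) ^ (q-1) * X (n+1)) := by
        field_simp
      rw [this]
      linarith
  have hG' : ∀ n < N, X (n+1) ≤ Real.exp (κ * ((q-1)/q * lam n)) * (X n + δ * F n) := by
    intro n hn
    set x := (q-1)/q * lam n with hx
    have hx0 : 0 ≤ x := mul_nonneg (div_nonneg (by linarith) hq0.le) (hl n)
    have hx1 : x ≤ (κ-1)/κ := hlam n hn
    have hx2 : κ * x ≤ κ - 1 := by
      rw [le_div_iff₀ (by linarith)] at hx1; linarith
    have h1 : 1 + κ * x ≤ Real.exp (κ * x) := by have := Real.add_one_le_exp (κ * x); linarith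
    have hx3 : 0 < 1 - x := by nlinarith
    have h2 : 1 ≤ (1 + κ * x) * (1 - x) := by nlinarith
    have h3 : 1 ≤ Real.exp (κ * x) * (1 - x) := h2.trans (mul_le_mul_of_nonneg_right h1 hx3.le)
    calc X (n+1) ≤ X (n+1) * (Real.exp (κ * x) * (1 - x)) := le_mul_of_one_le_right (hX0 _ hn) h3
      _ = Real.exp (κ * x) * (X (n+1) * (1 - x)) := by ring
      _ ≤ _ := mul_le_mul_of_nonneg_left (hG n hn) (Real.exp_pos _).le
  have hB : ∀ n ≤ N, X n ≤ Real.exp (κ * ((q-1)/q * ∑ i ∈ range n, lam i)) * (X 0 + ∑ i ∈ range n, δ * F i) := by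
    intro n
    induction n with
    | zero => intro _; simp
    | succ n ih =>
      intro hn
      have ih' := ih (by omega)
      refine (hG' n hn).trans ?_
      rw [sum_range_succ, sum_range_succ, mul_add ((q-1)/q), mul_add κ, Real.exp_add]
      set E := Real.exp (κ * ((q-1)/q * ∑ i ∈ range n, lam i)) with hEdef
      have hE1 : 1 ≤ E := by
        apply Real.one_le_exp
        exact mul_nonneg (by linarith) (mul_nonneg (div_nonneg (by linarith) hq0.le) (sum_nonneg fun i _ => hl i))
      have hdF : δ * F n ≤ E * (δ * F n) := le_mul_of_one_le_left (mul_nonneg hδ.le (hF0 n)) hE1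
      calc _ ≤ Real.exp (κ * ((q-1)/q * lam n)) * (E * (X 0 + ∑ i ∈ range n, δ * F i) + E * (δ * F n)) :=
            mul_le_mul_of_nonneg_left (by linarith) (Real.exp_pos _).le
        _ = _ := by ring
  set A := X 0 + ∑ i ∈ range N, δ * F i with hA
  set Lm := ∑ i ∈ range N, lam i with hLm
  set M := Real.exp (κ * ((q-1)/q * Lm)) * A with hMdef
  have hLm0 : 0 ≤ Lm := sum_nonneg fun i _ => hl i
  have hq' : 0 ≤ (q-1)/q := div_nonneg (by linarith) hq0.le
  have hsF : 0 ≤ ∑ i ∈ range N, δ * F i := sum_nonneg fun i _ => mul_nonneg hδ.le (hF0 i)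
  have hA0 : 0 ≤ A := add_nonneg (hX0 0 (by omega)) hsF
  have hM0 : 0 ≤ M := mul_nonneg (Real.exp_pos _).le hA0
  have hAM : A ≤ M := le_mul_of_one_le_left hA0
    (Real.one_le_exp (mul_nonneg (by linarith) (mul_nonneg hq' hLm0)))
  have hXM : ∀ n ≤ N, X n ≤ M := by
    intro n hn
    refine (hB n hn).trans ?_
    have hsub : range n ⊆ range N := range_subset_range.2 hn
    have h1 : ∑ i ∈ range n, lam i ≤ Lm := sum_le_sum_of_subset_of_nonneg hsub fun i _ _ => hl i
    have h2 : ∑ i ∈ range n, δ * F i ≤ ∑ i ∈ range N, δ * F i :=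
      sum_le_sum_of_subset_of_nonneg hsub fun i _ _ => mul_nonneg hδ.le (hF0 i)
    have h3 : 0 ≤ ∑ i ∈ range n, δ * F i := sum_nonneg fun i _ => mul_nonneg hδ.le (hF0 i)
    have h4 := hX0 0 (by omega)
    apply mul_le_mul
    · exact Real.exp_le_exp.2 (mul_le_mul_of_nonneg_left (mul_le_mul_of_nonneg_left h1 hq') (by linarith))
    · linarith
    · linarith
    · exact (Real.exp_pos _).le
  have hMq : M ^ q = M ^ (q-1) * M := by
    rw [← Real.rpow_add_one' hM0 (by linarith)]; simp
  have hSM : ∀ n ≤ N, S n ≤ M ^ q := by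
    intro n hn
    rw [← hXS n hn]
    exact Real.rpow_le_rpow (hX0 n hn) (hXM n hn) hq0.le
  have hMe : M ^ q = (Real.exp Lm) ^ (κ * (q-1)) * A ^ q := by
    rw [hMdef, Real.mul_rpow (Real.exp_pos _).le hA0, ← Real.exp_mul, ← Real.exp_mul]
    congr 2
    field_simp
  have hfin : ∀ n ∈ range N, q * (q-1) / 2 * 2 ^ (q-2) * ((∑ K, vol K * (((ρ (n+1) K + ρ n K)/2) ^ (q - 2) * (ρ (n+1) K - ρ n K)^2))
      + δ * ∑ K, ∑ L, p n L K * (((ρ (n+1) K + ρ (n+1) L)/2) ^ (q - 2) * (ρ (n+1) K - ρ (n+1) L)^2))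
      ≤ (S n - S (n+1)) + (q * M ^ (q-1)) * (δ * F n) + ((q-1) * M ^ q) * lam n := by
    intro n hn
    have hn := mem_range.1 hn
    refine (hE n hn).trans ?_
    have h1 : X (n+1) ^ (q-1) ≤ M ^ (q-1) :=
      Real.rpow_le_rpow (hX0 _ hn) (hXM _ hn) (by linarith)
    have h2 := mul_le_mul_of_nonneg_left h1 (mul_nonneg hq0.le (mul_nonneg hδ.le (hF0 n)))
    have h3 := mul_le_mul_of_nonneg_left (hSM (n+1) hn) (mul_nonneg (by linarith : 0 ≤ q - 1) (hl n))
    linarith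
  have hsum := sum_le_sum hfin
  rw [← mul_sum, sum_add_distrib, sum_add_distrib, sum_add_distrib, ← mul_sum, ← mul_sum _ _ (q * M ^ (q-1)),
    ← mul_sum _ _ ((q-1) * M ^ q), sum_range_sub'] at hsum
  refine hsum.trans ?_
  have h1 : q * M ^ (q-1) * ∑ i ∈ range N, δ * F i ≤ q * M ^ q := by
    rw [hMq, ← mul_assoc]
    refine mul_le_mul_of_nonneg_left ?_ (mul_nonneg hq0.le (Real.rpow_nonneg hM0 _))
    have := hX0 0 (by omega)
    linarith
  have h2 := hSM 0 (by omega)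
  have h3 := hS0 N le_rfl
  have h4 : 0 ≤ M ^ q := Real.rpow_nonneg hM0 _
  have h5 : (1 + q) * (Real.exp Lm) ^ (κ * (q-1)) * (1 + Lm) * A ^ q = (1+q) * (1 + Lm) * M ^ q := by
    rw [hMe]; ring
  change _ ≤ (1 + q) * (Real.exp Lm) ^ (κ * (q-1)) * (1 + Lm) * A ^ q
  rw [h5]
  have h6 : 0 ≤ Lm * M ^ q := mul_nonneg hLm0 h4
  linarith

/-- **Discrete energy estimate for the implicit upwind scheme.**
For `q̄ ∈ (1,2]` there is a constant `C > 0`, depending only on `q̄`, such that in any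
discrete upwind setting with `N` time steps, nonnegative data, `κ > 1`, time step
`δ > 0`, `λⁿ := δ · max_K ((div uⁿ)_K)⁻`, `Λ := exp(∑ₙ λⁿ)` and
`((q̄−1)/q̄) λⁿ ≤ (κ−1)/κ` for all `n < N`, the discrete temporal and spatial energies
are bounded by `C Λ^{κ(q̄−1)} (1 + ∑ₙ λⁿ)(‖ρ⁰‖_{ℓ^{q̄}} + ∑ₙ δ‖fⁿ‖_{ℓ^{q̄}})^{q̄}`.
(Summands whose two `ρ`-values vanish are `0` since `0 ^ s = 0` for `s ≠ 0` in `rpow`.) -/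
theorem upwind_energy_estimate (qb : ℝ) (hqb1 : 1 < qb) (hqb2 : qb ≤ 2) :
    ∃ C : ℝ, 0 < C ∧
      ∀ (ι : Type) [Fintype ι] [Nonempty ι] [DecidableEq ι]
        (vol : ι → ℝ), (∀ K, 0 < vol K) →
      ∀ (edge : ι → ι → ℝ), (∀ K L, edge K L = edge L K) → (∀ K L, 0 ≤ edge K L) →
      ∀ (u : ℕ → ι → ι → ℝ), (∀ n K L, u n K L = - u n L K) →
        (∀ n K L, edge K L = 0 → u n K L = 0) →
      ∀ (κ δ : ℝ), 1 < κ → 0 < δ →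
      ∀ (N : ℕ) (ρ f : ℕ → ι → ℝ),
        (∀ K, 0 ≤ ρ 0 K) → (∀ n K, 0 ≤ f n K) →
        (∀ n < N, ∀ K : ι,
          (ρ (n+1) K - ρ n K) / δ +
            ∑ L ∈ univ.erase K, edge K L / vol K *
              (max (u n K L) 0 * ρ (n+1) K - max (-u n K L) 0 * ρ (n+1) L) = f n K) →
      ∀ (lam : ℕ → ℝ),
        (∀ n, lam n = δ * univ.sup' univ_nonempty
          (fun K => max (-((∑ L ∈ univ.erase K, edge K L * u n K L) / vol K)) 0)) →
        (∀ n < N, (qb - 1)/qb * lam n ≤ (κ - 1)/κ) →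
      (∑ n ∈ Finset.range N, ∑ K, vol K *
          ((ρ (n+1) K + ρ n K)/2) ^ (qb - 2) * (ρ (n+1) K - ρ n K)^2)
        + δ * ∑ n ∈ Finset.range N, ∑ K, ∑ L ∈ univ.erase K,
            edge K L * |u n K L| *
              ((ρ (n+1) K + ρ (n+1) L)/2) ^ (qb - 2) * (ρ (n+1) K - ρ (n+1) L)^2
      ≤ C * (Real.exp (∑ n ∈ Finset.range N, lam n)) ^ (κ * (qb - 1)) *
          (1 + ∑ n ∈ Finset.range N, lam n) *
          ((∑ K, vol K * |ρ 0 K| ^ qb) ^ (1/qb) +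
            ∑ n ∈ Finset.range N, δ * (∑ K, vol K * |f n K| ^ qb) ^ (1/qb)) ^ qb := by
  have hc : 0 < qb * (qb-1) / 2 * (2:ℝ) ^ (qb-2) := by
    have : 0 < qb - 1 := by linarith
    positivity
  set c := qb * (qb-1) / 2 * (2:ℝ) ^ (qb-2) with hcdef
  refine ⟨2 * (1 + qb) / c, by positivity, ?_⟩
  intro ι _ _ _ vol hv edge hsym hedge u hanti _ κ δ hκ hδ N ρ f h0 hf hstep lam hlam hκl
  set p : ℕ → ι → ι → ℝ := fun n K L => edge K L * max (u n K L) 0 with hpdef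
  have hp : ∀ n K L, 0 ≤ p n K L := fun n K L => mul_nonneg (hedge K L) (le_max_right _ _)
  have hpT : ∀ n K L, p n L K = edge K L * max (- u n K L) 0 := by
    intro n K L
    simp only [hpdef]
    rw [hsym L K, hanti n L K]
  have hpd : ∀ n K, u n K K = 0 := by
    intro n K
    have := hanti n K K
    linarith
  have hpsub : ∀ n K L, p n K L - p n L K = edge K L * u n K L := by
    intro n K L
    rw [hpT n K L]
    simp only [hpdef]
    rcases le_total 0 (u n K L) with hu | hu
    · rw [max_eq_left hu, max_eq_right (by linarith)]; ring
    · rw [max_eq_right hu, max_eq_left (by linarith)]; ring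
  have hpadd : ∀ n K L, edge K L * |u n K L| = p n K L + p n L K := by
    intro n K L
    rw [hpT n K L]
    simp only [hpdef]
    rcases le_total 0 (u n K L) with hu | hu
    · rw [max_eq_left hu, max_eq_right (by linarith), abs_of_nonneg hu]; ring
    · rw [max_eq_right hu, max_eq_left (by linarith), abs_of_nonpos hu]; ring
  have hl : ∀ n, 0 ≤ lam n := by
    intro n
    rw [hlam]
    refine mul_nonneg hδ.le ?_
    obtain ⟨K⟩ := ‹Nonempty ι›
    exact (le_max_right _ _).trans (le_sup' (fun K => max (-((∑ L ∈ univ.erase K, edge K L * u n K L) / vol K)) 0) (mem_univ K))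
  have hd : ∀ n < N, ∀ K, - (δ * ∑ L, (p n K L - p n L K)) ≤ lam n * vol K := by
    intro n _ K
    have h1 := (le_max_left _ _).trans (le_sup' (fun K => max (-((∑ L ∈ univ.erase K, edge K L * u n K L) / vol K)) 0) (mem_univ K))
    have h2 := mul_le_mul_of_nonneg_left h1 hδ.le
    rw [← hlam n] at h2
    have h3 := mul_le_mul_of_nonneg_right h2 (hv K).le
    have h4 : ∑ L ∈ univ.erase K, edge K L * u n K L = ∑ L, (p n K L - p n L K) := by
      simp only [hpsub]
      exact sum_erase _ (by rw [hpd, mul_zero])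
    rw [h4] at h3
    refine le_trans (le_of_eq ?_) h3
    have := (hv K).ne'
    field_simp
  have hst : ∀ n < N, ∀ K, vol K * (ρ (n+1) K - ρ n K)
      + δ * ∑ L, (p n K L * ρ (n+1) K - p n L K * ρ (n+1) L) = δ * (vol K * f n K) := by
    intro n hn K
    have h1 := hstep n hn K
    have hv0 := (hv K).ne'
    have h2 : ∑ L ∈ univ.erase K, edge K L / vol K *
              (max (u n K L) 0 * ρ (n+1) K - max (-u n K L) 0 * ρ (n+1) L)
        = (∑ L, (p n K L * ρ (n+1) K - p n L K * ρ (n+1) L)) / vol K := by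
      rw [sum_erase _ (by simp [hpd]), sum_div]
      refine sum_congr rfl fun L _ => ?_
      rw [hpT n K L]
      simp only [hpdef]
      ring
    rw [h2] at h1
    rw [← h1]
    field_simp
  have main := multi_step qb hqb1 hqb2 κ δ hκ hδ vol hv p hp N ρ f h0 hf lam hl hst hd hκl
  rw [← hcdef] at main
  simp only [abs_of_nonneg (h0 _), abs_of_nonneg (hf _ _)]
  have hsp : ∀ n, ∑ K, ∑ L ∈ univ.erase K, edge K L * |u n K L| *
              ((ρ (n+1) K + ρ (n+1) L)/2) ^ (qb - 2) * (ρ (n+1) K - ρ (n+1) L)^2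
      = 2 * ∑ K, ∑ L, p n L K * (((ρ (n+1) K + ρ (n+1) L)/2) ^ (qb - 2) * (ρ (n+1) K - ρ (n+1) L)^2) := by
    intro n
    have h1 : ∑ K, ∑ L, p n K L * (((ρ (n+1) K + ρ (n+1) L)/2) ^ (qb - 2) * (ρ (n+1) K - ρ (n+1) L)^2)
      = ∑ K, ∑ L, p n L K * (((ρ (n+1) K + ρ (n+1) L)/2) ^ (qb - 2) * (ρ (n+1) K - ρ (n+1) L)^2) := by
      rw [sum_comm]
      refine sum_congr rfl fun K _ => sum_congr rfl fun L _ => ?_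
      rw [add_comm (ρ (n+1) L)]; ring
    rw [two_mul]
    nth_rewrite 1 [← h1]
    rw [← sum_add_distrib]
    refine sum_congr rfl fun K _ => ?_
    rw [sum_erase _ (by simp), ← sum_add_distrib]
    refine sum_congr rfl fun L _ => ?_
    rw [hpadd]; ring
  simp only [hsp]
  rw [← mul_sum]
  have hT : 0 ≤ ∑ n ∈ range N, ∑ K, vol K * (((ρ (n+1) K + ρ n K)/2) ^ (qb - 2) * (ρ (n+1) K - ρ n K)^2) := by
    have hρ : ∀ n ≤ N, ∀ K, 0 ≤ ρ n K := by
      intro n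
      induction n with
      | zero => exact fun _ => h0
      | succ n ih =>
        intro hn
        exact nonneg_step δ hδ vol hv (p n) (hp n) _ _ (f n) (ih (by omega)) (hf n) (hst n (by omega))
    refine sum_nonneg fun n hn => sum_nonneg fun K _ => mul_nonneg (hv K).le (mul_nonneg ?_ (sq_nonneg _))
    have hn := mem_range.1 hn
    have h1 := hρ n hn.le K
    have h2 := hρ (n+1) hn K
    positivity
  simp only [mul_assoc (vol _)]
  set T := ∑ n ∈ range N, ∑ K, vol K * (((ρ (n+1) K + ρ n K)/2) ^ (qb - 2) * (ρ (n+1) K - ρ n K)^2) with hTdef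
  set P := ∑ n ∈ range N, ∑ K, ∑ L, p n L K * (((ρ (n+1) K + ρ (n+1) L)/2) ^ (qb - 2) * (ρ (n+1) K - ρ (n+1) L)^2) with hPdef
  refine le_of_mul_le_mul_left ?_ hc
  have hcT := mul_nonneg hc.le hT
  refine le_trans (b := 2 * (c * (T + δ * P))) (by linarith) ?_
  refine (mul_le_mul_of_nonneg_left main (by norm_num)).trans (le_of_eq ?_)
  field_simp
end

section
/- Spatial weak BV estimate: in the discrete upwind setting with N time steps, let q ∈ (1,∞), κ > 1, δ > 0, h > 0, U > 0, set T := Nδ, λⁿ := δ · max_K ((div uⁿ)_K)⁻ and Λ := exp(Σ_n λⁿ). Assume ((q−1)/q) λⁿ ≤ (κ−1)/κ for every n, that |uⁿ_{KL}| ≤ U for all n, K, L, and the mesh regularity bound Σ_{L≠K} |K∣L| ≤ C₀ |K|/h for all K ∈ 𝒯 with some C₀ > 0. Let ρ⁰, f⁰,…,f^{N−1} ∈ ℝ^𝒯 be arbitrary and let ρⁿ⁺¹ solve one step of the implicit upwind scheme with data ρⁿ, fⁿ, fluxes uⁿ and time step δ for each n. Then there exists a constant C, depending only on q, κ, Λ,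 C₀, Σ_K |K|, ‖ρ⁰‖_{ℓ^q} and Σ_n δ‖fⁿ‖_{ℓ^q}, such that δ Σ_{n=0}^{N−1} Σ_K Σ_{L≠K} |K∣L| |uⁿ_{KL}| |ρⁿ⁺¹_K − ρⁿ⁺¹_L| ≤ C √(T U / h). -/
open Finset

lemma aux_inc (p R : ℝ) (hp : 1 < p) (hp2 : p ≤ 2) (s r : ℝ) (hs : 0 ≤ s) (hsr : s ≤ r)
    (hrR : r ≤ R) : s ^ (p-1) - (p-1) * R^(p-2) * s ≤ r^(p-1) - (p-1) * R^(p-2) * r := by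
  rcases eq_or_lt_of_le (hs.trans hsr) with h0 | hr
  · have : s = r := by linarith
    rw [this]
  have h1 := rpow_one_add_le_one_add_mul_self (s := s / r - 1) (p := p - 1)
    (by have : 0 ≤ s / r := by positivity
        linarith) (by linarith) (by linarith)
  rw [add_sub_cancel, Real.div_rpow hs hr.le, div_le_iff₀ (by positivity)] at h1
  have h2 : r ^ (p-1) = r ^ (p-2) * r := by
    rw [← Real.rpow_add_one hr.ne']; congr 1; ring
  have h3 : R ^ (p-2) ≤ r ^ (p-2) := Real.rpow_le_rpow_of_nonpos hr hrR (by linarith)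
  have h4 : (1 + (p-1)*(s/r - 1)) * r^(p-1) = r^(p-1) - (p-1) * r^(p-2) * (r - s) := by
    rw [h2]; field_simp; ring
  have h5 : (p-1) * R^(p-2) * (r-s) ≤ (p-1) * r^(p-2) * (r - s) := by
    apply mul_le_mul_of_nonneg_right _ (by linarith)
    apply mul_le_mul_of_nonneg_left h3 (by linarith)
  nlinarith

lemma aux_pos (p s : ℝ) (hp : 1 < p) (hs : 0 ≤ s) : |s| ^ (p-2) * s = s ^ (p-1) := by
  rcases eq_or_lt_of_le hs with h | h
  · rw [← h]; rw [Real.zero_rpow (by linarith)]; simp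
  · rw [abs_of_pos h, ← Real.rpow_add_one h.ne']; congr 1; ring

lemma aux_mono (p R : ℝ) (hp : 1 < p) (hp2 : p ≤ 2) (s r : ℝ) (hs : -R ≤ s) (hsr : s ≤ r)
    (hrR : r ≤ R) : |s| ^ (p-2) * s - (p-1) * R^(p-2) * s
      ≤ |r| ^ (p-2) * r - (p-1) * R^(p-2) * r := by
  have key : ∀ x : ℝ, 0 ≤ x → x ≤ R → 0 ≤ |x| ^ (p-2) * x - (p-1) * R^(p-2) * x := by
    intro x hx hxR
    have := aux_inc p R hp hp2 0 x le_rfl hx hxR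
    rw [aux_pos p x hp hx]
    rw [Real.zero_rpow (by linarith)] at this
    linarith
  have key2 : ∀ x : ℝ, x ≤ 0 → -R ≤ x → |x| ^ (p-2) * x - (p-1) * R^(p-2) * x ≤ 0 := by
    intro x hx hxR
    have := key (-x) (by linarith) (by linarith)
    rw [abs_neg] at this
    linarith
  rcases le_total 0 s with h0 | h0
  · rw [aux_pos p s hp h0, aux_pos p r hp (h0.trans hsr)]
    exact aux_inc p R hp hp2 s r h0 hsr hrR
  rcases le_total 0 r with h1 | h1
  · exact (key2 s h0 hs).trans (key r h1 hrR)
  · have := aux_inc p R hp hp2 (-r) (-s) (by linarith) (by linarith) (by linarith)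
    rw [← aux_pos p (-r) hp (by linarith), ← aux_pos p (-s) hp (by linarith), abs_neg, abs_neg]
      at this
    linarith

lemma bregman_lower (p : ℝ) (hp : 1 < p) (hp2 : p ≤ 2) (a b : ℝ) :
    p * (p-1) / 2 * (|a|+|b|)^(p-2) * (a-b)^2 ≤
      |a|^p - |b|^p - p * |b|^(p-2) * b * (a-b) := by
  set R := |a| + |b| with hR
  have ha : a ∈ Set.Icc (-R) R := by
    have := abs_nonneg b
    have := abs_le.1 (le_refl |a|)
    constructor <;> linarith [this.1, this.2]
  have hb : b ∈ Set.Icc (-R) R := by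
    have := abs_nonneg a
    have := abs_le.1 (le_refl |b|)
    constructor <;> linarith [this.1, this.2]
  let g : ℝ → ℝ := fun x => |x|^p - p * (p-1) / 2 * R^(p-2) * x^2
  let g' : ℝ → ℝ := fun x => p * |x|^(p-2) * x - p * (p-1) / 2 * R^(p-2) * (2 * x)
  have hg : ∀ x, HasDerivAt g (g' x) x := by
    intro x
    have h1 := hasDerivAt_abs_rpow x hp
    have h2 := (hasDerivAt_pow 2 x).const_mul (p * (p-1) / 2 * R^(p-2))
    have h3 : HasDerivAt g _ x := h1.sub h2
    convert h3 using 1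
    simp [g']
  have hconv : ConvexOn ℝ (Set.Icc (-R) R) g := by
    apply MonotoneOn.convexOn_of_deriv (convex_Icc _ _)
    · exact fun x _ => (hg x).continuousAt.continuousWithinAt
    · exact fun x _ => (hg x).differentiableAt.differentiableWithinAt
    · intro x hx y hy hxy
      have hx := interior_subset hx
      have hy := interior_subset hy
      rw [(hg x).deriv, (hg y).deriv]
      have := aux_mono p R hp hp2 x y hx.1 hxy hy.2
      have := mul_le_mul_of_nonneg_left this (by linarith : 0 ≤ p)
      simp only [g']
      linarith
  have hfin : g' b * (a - b) ≤ g a - g b := by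
    rcases lt_trichotomy a b with h | h | h
    · have := hconv.slope_le_of_hasDerivAt ha hb h (hg b)
      rw [slope_def_field, div_le_iff₀ (by linarith)] at this
      linarith
    · rw [h]; simp
    · have := hconv.le_slope_of_hasDerivAt hb ha h (hg b)
      rw [slope_def_field, le_div_iff₀ (by linarith)] at this
      linarith
  simp only [g, g'] at hfin
  linarith

lemma bregman_nonneg (p : ℝ) (hp : 1 < p) (hp2 : p ≤ 2) (a b : ℝ) :
    0 ≤ |a|^p - |b|^p - p * |b|^(p-2) * b * (a-b) := by
  refine le_trans ?_ (bregman_lower p hp hp2 a b)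
  have : 0 ≤ p - 1 := by linarith
  have : 0 ≤ p := by linarith
  positivity

lemma bregman_young (p : ℝ) (hp : 1 < p) (hp2 : p ≤ 2) (a b t : ℝ) (ht : 0 < t) :
    |a-b| ≤ t * (|a|^p - |b|^p - p * |b|^(p-2) * b * (a-b)) +
      2 / (p * (p-1)) * (1 + |a|^p + |b|^p) / t := by
  have hD := bregman_lower p hp hp2 a b
  have hp1 : 0 < p - 1 := by linarith
  have hp0 : 0 < p := by linarith
  set D := |a|^p - |b|^p - p * |b|^(p-2) * b * (a-b)
  rcases eq_or_lt_of_le (show 0 ≤ |a| + |b| by positivity) with h0 | hR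
  · have h1 : a = 0 := abs_eq_zero.1 (by linarith [abs_nonneg a, abs_nonneg b])
    have h2 : b = 0 := abs_eq_zero.1 (by linarith [abs_nonneg a, abs_nonneg b])
    have hD0 := bregman_nonneg p hp hp2 a b
    have : |a - b| = 0 := by rw [h1, h2]; simp
    rw [this]
    have : 0 ≤ D := hD0
    positivity
  have hRp : (|a|+|b|)^p ≤ 4 * (|a|^p + |b|^p) := by
    have h1 : (|a|+|b|)^p ≤ (2 * max |a| |b|)^p := by
      apply Real.rpow_le_rpow hR.le _ hp0.le
      linarith [le_max_left |a| |b|, le_max_right |a| |b|]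
    rw [Real.mul_rpow (by norm_num) (by positivity)] at h1
    have h2 : (2:ℝ)^p ≤ 4 := by
      calc (2:ℝ)^p ≤ (2:ℝ)^(2:ℝ) := Real.rpow_le_rpow_of_exponent_le (by norm_num) hp2
        _ = 4 := by norm_num
    have h3 : (max |a| |b|)^p ≤ |a|^p + |b|^p := by
      have := Real.rpow_nonneg (abs_nonneg a) p
      have := Real.rpow_nonneg (abs_nonneg b) p
      rcases max_choice |a| |b| with h | h <;> rw [h] <;> linarith
    calc _ ≤ _ := h1
      _ ≤ 4 * (|a|^p + |b|^p) := by gcongr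
  have hR2 : (|a|+|b|)^(2-p) ≤ 1 + (|a|+|b|)^p := by
    rcases le_total (|a|+|b|) 1 with h | h
    · have := Real.rpow_le_one hR.le h (by linarith : 0 ≤ 2-p)
      have := Real.rpow_nonneg hR.le p
      linarith
    · have := Real.rpow_le_rpow_of_exponent_le h (by linarith : 2-p ≤ p)
      linarith
  set y := (|a|+|b|)^(p-2) with hy
  have hypos : 0 < y := Real.rpow_pos_of_pos hR _
  have hyi : (|a|+|b|)^(2-p) = 1 / y := by
    rw [hy, show 2-p = -(p-2) by ring, Real.rpow_neg hR.le]; simp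
  rw [hyi] at hR2
  have hW : 1 / y ≤ 4 * (1 + |a|^p + |b|^p) := by linarith
  have e : (a-b)^2 = |a-b|^2 := (sq_abs _).symm
  rw [e] at hD
  set d := |a-b|
  set c := p * (p-1)/2 with hc
  have hcpos : 0 < c := by positivity
  have hc2 : 2 / (p * (p-1)) = 1 / c := by rw [hc]; field_simp
  rw [hc2]
  have s1 : t * (c * y * d^2) ≤ t * D := mul_le_mul_of_nonneg_left hD ht.le
  have s2 : (1/c) * (1/y/4) / t ≤ 1 / c * (1 + |a|^p + |b|^p) / t := by
    gcongr; linarith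
  have s3 : d ≤ t * (c * y * d^2) + (1/c) * (1/y/4) / t := by
    have : t * (c * y * d^2) + (1/c) * (1/y/4) / t - d = (2 * t*c*y*d - 1)^2 / (4*t*c*y) := by
      field_simp; ring
    have h : 0 ≤ (2 * t*c*y*d - 1)^2 / (4*t*c*y) := by positivity
    linarith
  linarith

/-- weighted discrete norm -/
noncomputable def wn {ι : Type} [Fintype ι] (vol : ι → ℝ) (p : ℝ) (v : ι → ℝ) : ℝ :=
  (∑ K, vol K * |v K| ^ p) ^ (1/p)

lemma wn_nonneg {ι : Type} [Fintype ι] (vol : ι → ℝ) (hvol : ∀ K, 0 < vol K) (p : ℝ) (v : ι → ℝ) :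
    0 ≤ wn vol p v := by
  apply Real.rpow_nonneg
  exact sum_nonneg fun K _ => mul_nonneg (hvol K).le (Real.rpow_nonneg (abs_nonneg _) _)

lemma wn_pow {ι : Type} [Fintype ι] (vol : ι → ℝ) (hvol : ∀ K, 0 < vol K) (p : ℝ) (hp : 1 < p)
    (v : ι → ℝ) : (wn vol p v) ^ p = ∑ K, vol K * |v K| ^ p := by
  unfold wn
  rw [← Real.rpow_mul, one_div, inv_mul_cancel₀ (by linarith), Real.rpow_one]
  exact sum_nonneg fun K _ => mul_nonneg (hvol K).le (Real.rpow_nonneg (abs_nonneg _) _)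

lemma wn_aux {v : ℝ} (hv : 0 < v) (x p : ℝ) (hp : 0 < p) : |v ^ (1/p) * x| ^ p = v * |x| ^ p := by
  rw [abs_mul, Real.mul_rpow (abs_nonneg _) (abs_nonneg _), abs_of_pos (Real.rpow_pos_of_pos hv _),
    ← Real.rpow_mul hv.le, one_div, inv_mul_cancel₀ hp.ne', Real.rpow_one]

lemma wn_holder {ι : Type} [Fintype ι] (vol : ι → ℝ) (hvol : ∀ K, 0 < vol K) (p : ℝ) (hp : 1 < p)
    (g r : ι → ℝ) : ∑ K, vol K * (|g K| * |r K| ^ (p-1)) ≤ wn vol p g * (wn vol p r) ^ (p-1) := by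
  have hpq := Real.HolderConjugate.conjExponent hp
  have hp0 : 0 < p := by linarith
  have h := Real.inner_le_Lp_mul_Lq univ (fun K => vol K ^ (1/p) * |g K|)
    (fun K => vol K ^ (1/p.conjExponent) * |r K| ^ (p-1)) hpq
  have e1 : ∀ K, vol K ^ (1/p) * |g K| * (vol K ^ (1/p.conjExponent) * |r K| ^ (p-1))
      = vol K * (|g K| * |r K| ^ (p-1)) := by
    intro K
    have : vol K ^ (1/p) * vol K ^ (1/p.conjExponent) = vol K := by
      rw [← Real.rpow_add (hvol K), one_div, one_div, hpq.inv_add_inv_eq_one, Real.rpow_one]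
    calc _ = (vol K ^ (1/p) * vol K ^ (1/p.conjExponent)) * (|g K| * |r K| ^ (p-1)) := by ring
      _ = _ := by rw [this]
  have hconj : (p - 1) * p.conjExponent = p := by
    unfold Real.conjExponent; field_simp [show p - 1 ≠ 0 by linarith]
  have e2 : ∀ K, |vol K ^ (1/p.conjExponent) * |r K| ^ (p-1)| ^ p.conjExponent
      = vol K * |r K| ^ p := by
    intro K
    rw [wn_aux (hvol K) _ _ hpq.symm.pos, abs_of_nonneg (Real.rpow_nonneg (abs_nonneg _) _),
      ← Real.rpow_mul (abs_nonneg _), hconj]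
  simp only [e1, e2, wn_aux (hvol _) _ _ hp0, abs_abs] at h
  refine h.trans (le_of_eq ?_)
  unfold wn
  congr 1
  rw [← Real.rpow_mul (sum_nonneg fun K _ => mul_nonneg (hvol K).le
    (Real.rpow_nonneg (abs_nonneg _) _))]
  congr 1
  unfold Real.conjExponent
  field_simp

lemma wn_add {ι : Type} [Fintype ι] (vol : ι → ℝ) (hvol : ∀ K, 0 < vol K) (p : ℝ) (hp : 1 < p)
    (g r : ι → ℝ) : wn vol p (fun K => g K + r K) ≤ wn vol p g + wn vol p r := by
  have hp0 : 0 < p := by linarith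
  have h := Real.Lp_add_le univ (fun K => vol K ^ (1/p) * g K) (fun K => vol K ^ (1/p) * r K) hp.le
  simp only [← mul_add, wn_aux (hvol _) _ _ hp0] at h
  exact h

lemma wn_smul {ι : Type} [Fintype ι] (vol : ι → ℝ) (hvol : ∀ K, 0 < vol K) (p : ℝ) (hp : 1 < p)
    (δ : ℝ) (hδ : 0 < δ) (r : ι → ℝ) : wn vol p (fun K => δ * r K) = δ * wn vol p r := by
  have hp0 : 0 < p := by linarith
  unfold wn
  have : ∑ K, vol K * |δ * r K| ^ p = δ ^ p * ∑ K, vol K * |r K| ^ p := by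
    rw [mul_sum]
    refine sum_congr rfl fun K _ => ?_
    rw [abs_mul, Real.mul_rpow (abs_nonneg _) (abs_nonneg _), abs_of_pos hδ]; ring
  rw [this, Real.mul_rpow (by positivity) (sum_nonneg fun K _ => mul_nonneg (hvol K).le
    (Real.rpow_nonneg (abs_nonneg _) _)), ← Real.rpow_mul hδ.le, mul_one_div_cancel hp0.ne',
    Real.rpow_one]

lemma wn_le {ι : Type} [Fintype ι] (vol : ι → ℝ) (hvol : ∀ K, 0 < vol K) (p q : ℝ)
    (hp : 1 < p) (hpq : p ≤ q) (v : ι → ℝ) :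
    wn vol p v ≤ (∑ K, vol K) ^ (1/p - 1/q) * wn vol q v := by
  have hp0 : 0 < p := by linarith
  have hq0 : 0 < q := by linarith
  have h := Real.inner_le_weight_mul_Lp_of_nonneg univ (p := q/p) ((one_le_div hp0).2 hpq) vol
    (fun K => |v K| ^ p) (fun K => (hvol K).le) (fun K => Real.rpow_nonneg (abs_nonneg _) _)
  have e : ∀ K, (|v K| ^ p) ^ (q/p) = |v K| ^ q := by
    intro K; rw [← Real.rpow_mul (abs_nonneg _)]; congr 1; field_simp
  simp only [e] at h
  have hV : 0 ≤ ∑ K, vol K := sum_nonneg fun K _ => (hvol K).le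
  have hS : ∀ p : ℝ, 0 ≤ ∑ K, vol K * |v K| ^ p := fun p => sum_nonneg fun K _ => mul_nonneg (hvol K).le
    (Real.rpow_nonneg (abs_nonneg _) _)
  unfold wn
  refine (Real.rpow_le_rpow (hS p) h (by positivity)).trans (le_of_eq ?_)
  rw [Real.mul_rpow (by positivity) (Real.rpow_nonneg (hS q) _), ← Real.rpow_mul hV,
    ← Real.rpow_mul (hS q)]
  congr 2 <;> field_simp

lemma ph_mul (p s : ℝ) (hp : 1 < p) : p * |s|^(p-2) * s * s = p * |s|^p := by
  by_cases h : s = 0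
  · subst h; simp [Real.zero_rpow (show p ≠ 0 by linarith)]
  · have : |s| ^ p = |s|^(p-2) * |s|^2 := by
      rw [← Real.rpow_natCast, ← Real.rpow_add (abs_pos.2 h)]; congr 1; push_cast; ring
    rw [this, sq_abs]; ring

lemma ph_abs (p s : ℝ) (hp : 1 < p) : |p * |s|^(p-2) * s| = p * |s|^(p-1) := by
  have hp0 : 0 < p := by linarith
  rw [abs_mul, abs_mul, abs_of_pos hp0, abs_of_nonneg (Real.rpow_nonneg (abs_nonneg _) _)]
  by_cases h : s = 0
  · subst h; simp [Real.zero_rpow (show p - 1 ≠ 0 by linarith)]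
  · rw [mul_assoc, ← Real.rpow_add_one (abs_pos.2 h).ne']; congr 2; ring

/-- Bregman distance -/
noncomputable def bd (p a b : ℝ) : ℝ := |a|^p - |b|^p - p * |b|^(p-2) * b * (a-b)

lemma erase_full {ι : Type} [Fintype ι] [DecidableEq ι] (K : ι) (F : ι → ℝ) (h : F K = 0) :
    ∑ L ∈ univ.erase K, F L = ∑ L, F L := sum_erase _ h

lemma flux_identity {ι : Type} [Fintype ι] (e u : ι → ι → ℝ)
    (he : ∀ K L, e K L = e L K) (hu : ∀ K L, u K L = - u L K) (p : ℝ) (hp : 1 < p) (r : ι → ℝ) :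
    ∑ K, (∑ L, e K L * (max (u K L) 0 * r K - max (-u K L) 0 * r L)) * (p * |r K|^(p-2) * r K)
     = ∑ K, ∑ L, e K L * max (u K L) 0 * bd p (r K) (r L)
      + (p-1) * ∑ K, |r K|^p * ∑ L, e K L * u K L := by
  have swap : ∀ F : ι → ι → ℝ, ∑ K, ∑ L, e K L * max (-u K L) 0 * F K L
      = ∑ K, ∑ L, e K L * max (u K L) 0 * F L K := by
    intro F
    rw [sum_comm]
    refine sum_congr rfl fun K _ => sum_congr rfl fun L _ => ?_
    rw [he L K, hu L K, neg_neg]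
  have hdec : ∀ x : ℝ, x = max x 0 - max (-x) 0 := by
    intro x; rcases le_total 0 x with h | h
    · rw [max_eq_left h, max_eq_right (by linarith)]; ring
    · rw [max_eq_right h, max_eq_left (by linarith)]; ring
  have l1 : ∑ K, (∑ L, e K L * (max (u K L) 0 * r K - max (-u K L) 0 * r L))
        * (p * |r K|^(p-2) * r K)
      = ∑ K, ∑ L, e K L * max (u K L) 0 * (r K * (p * |r K|^(p-2) * r K))
       - ∑ K, ∑ L, e K L * max (-u K L) 0 * (r L * (p * |r K|^(p-2) * r K)) := by
    rw [← sum_sub_distrib]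
    refine sum_congr rfl fun K _ => ?_
    rw [sum_mul, ← sum_sub_distrib]
    refine sum_congr rfl fun L _ => ?_
    ring
  have l2 : ∑ K, |r K|^p * ∑ L, e K L * u K L
      = ∑ K, ∑ L, e K L * max (u K L) 0 * |r K|^p - ∑ K, ∑ L, e K L * max (-u K L) 0 * |r K|^p := by
    rw [← sum_sub_distrib]
    refine sum_congr rfl fun K _ => ?_
    rw [mul_sum, ← sum_sub_distrib]
    refine sum_congr rfl fun L _ => ?_
    conv_lhs => rw [hdec (u K L)]
    ring
  rw [l1, l2, swap (fun K L => r L * (p * |r K|^(p-2) * r K)), swap (fun K L => |r K|^p),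
    ← sum_sub_distrib, ← sum_sub_distrib, mul_sum, ← sum_add_distrib]
  refine sum_congr rfl fun K _ => ?_
  rw [← sum_sub_distrib, ← sum_sub_distrib, mul_sum, ← sum_add_distrib]
  refine sum_congr rfl fun L _ => ?_
  have h1 := ph_mul p (r K) hp
  have h2 := ph_mul p (r L) hp
  unfold bd
  linear_combination e K L * max (u K L) 0 * (h1 - h2)

lemma step_ineq {ι : Type} [Fintype ι] [DecidableEq ι] (vol : ι → ℝ) (hvol : ∀ K, 0 < vol K)
    (e u : ι → ι → ℝ) (he : ∀ K L, e K L = e L K) (hu : ∀ K L, u K L = - u L K)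
    (p : ℝ) (hp : 1 < p) (δ lam : ℝ) (hδ : 0 < δ) (r s f : ι → ℝ)
    (hsch : ∀ K : ι, (r K - s K) / δ +
            ∑ L ∈ univ.erase K, e K L / vol K *
              (max (u K L) 0 * r K - max (-u K L) 0 * r L) = f K)
    (hlam : ∀ K, -(lam * vol K) ≤ δ * ∑ L, e K L * u K L) :
    ∑ K, vol K * ((r K - s K - δ * f K) * (p * |r K|^(p-2) * r K))
      + δ * ∑ K, ∑ L, e K L * max (u K L) 0 * bd p (r K) (r L)
      ≤ (p-1) * lam * ∑ K, vol K * |r K|^p := by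
  have huu : ∀ K, u K K = 0 := fun K => by linarith [hu K K]
  have h1 : ∀ K, vol K * (r K - s K - δ * f K) =
      - δ * ∑ L, e K L * (max (u K L) 0 * r K - max (-u K L) 0 * r L) := by
    intro K
    have hv := (hvol K).ne'
    rw [← hsch K, erase_full K _ (by simp [huu K])]
    have : ∑ L, e K L / vol K * (max (u K L) 0 * r K - max (-u K L) 0 * r L)
        = (∑ L, e K L * (max (u K L) 0 * r K - max (-u K L) 0 * r L)) / vol K := by
      rw [sum_div]
      exact sum_congr rfl fun L _ => by ring
    rw [this]
    field_simp
    ring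
  have h2 : ∑ K, vol K * ((r K - s K - δ * f K) * (p * |r K|^(p-2) * r K)) =
      -δ * ∑ K, (∑ L, e K L * (max (u K L) 0 * r K - max (-u K L) 0 * r L))
        * (p * |r K|^(p-2) * r K) := by
    rw [mul_sum]
    refine sum_congr rfl fun K _ => ?_
    rw [← mul_assoc, h1 K]; ring
  rw [h2, flux_identity e u he hu p hp r]
  have h3 : -(lam * ∑ K, vol K * |r K|^p) ≤ δ * ∑ K, |r K|^p * ∑ L, e K L * u K L := by
    rw [mul_sum, mul_sum, ← sum_neg_distrib]
    refine sum_le_sum fun K _ => ?_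
    have := mul_le_mul_of_nonneg_left (hlam K) (Real.rpow_nonneg (abs_nonneg (r K)) p)
    linarith
  have := mul_le_mul_of_nonneg_left h3 (by linarith : 0 ≤ p - 1)
  linarith

lemma holder_ph {ι : Type} [Fintype ι] (vol : ι → ℝ) (hvol : ∀ K, 0 < vol K) (p : ℝ) (hp : 1 < p)
    (g r : ι → ℝ) : ∑ K, vol K * (g K * (p * |r K|^(p-2) * r K))
      ≤ p * (wn vol p g * (wn vol p r) ^ (p-1)) := by
  refine le_trans ?_ (mul_le_mul_of_nonneg_left (wn_holder vol hvol p hp g r) (by linarith))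
  rw [mul_sum]
  refine sum_le_sum fun K _ => ?_
  have h := le_abs_self (g K * (p * |r K|^(p-2) * r K))
  rw [abs_mul, ph_abs p _ hp] at h
  have := mul_le_mul_of_nonneg_left h (hvol K).le
  linarith

lemma bd_nonneg (p : ℝ) (hp : 1 < p) (hp2 : p ≤ 2) (a b : ℝ) : 0 ≤ bd p a b :=
  bregman_nonneg p hp hp2 a b

lemma step_energy {ι : Type} [Fintype ι] [DecidableEq ι] (vol : ι → ℝ) (hvol : ∀ K, 0 < vol K)
    (e u : ι → ι → ℝ) (he : ∀ K L, e K L = e L K) (hu : ∀ K L, u K L = - u L K)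
    (p : ℝ) (hp : 1 < p) (hp2 : p ≤ 2) (δ lam : ℝ) (hδ : 0 < δ) (r s f : ι → ℝ)
    (hsch : ∀ K : ι, (r K - s K) / δ +
            ∑ L ∈ univ.erase K, e K L / vol K *
              (max (u K L) 0 * r K - max (-u K L) 0 * r L) = f K)
    (hlam : ∀ K, -(lam * vol K) ≤ δ * ∑ L, e K L * u K L) :
    (wn vol p r) ^ p - (wn vol p s) ^ p
      + δ * ∑ K, ∑ L, e K L * max (u K L) 0 * bd p (r K) (r L)
      ≤ (p-1) * lam * (wn vol p r) ^ p + p * (δ * wn vol p f * (wn vol p r) ^ (p-1)) := by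
  have h := step_ineq vol hvol e u he hu p hp δ lam hδ r s f hsch hlam
  have hf := holder_ph vol hvol p hp (fun K => δ * f K) r
  rw [wn_smul vol hvol p hp δ hδ] at hf
  rw [wn_pow vol hvol p hp, wn_pow vol hvol p hp]
  have : ∑ K, vol K * |r K|^p - ∑ K, vol K * |s K|^p ≤
      ∑ K, vol K * ((r K - s K - δ * f K) * (p * |r K|^(p-2) * r K))
      + ∑ K, vol K * (δ * f K * (p * |r K|^(p-2) * r K)) := by
    rw [← sum_sub_distrib, ← sum_add_distrib]
    refine sum_le_sum fun K _ => ?_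
    have := mul_le_mul_of_nonneg_left (bregman_nonneg p hp hp2 (s K) (r K)) (hvol K).le
    linarith
  linarith

lemma step_stab {ι : Type} [Fintype ι] [DecidableEq ι] (vol : ι → ℝ) (hvol : ∀ K, 0 < vol K)
    (e u : ι → ι → ℝ) (he : ∀ K L, e K L = e L K) (he0 : ∀ K L, 0 ≤ e K L)
    (hu : ∀ K L, u K L = - u L K)
    (p κ : ℝ) (hp : 1 < p) (hp2 : p ≤ 2) (hκ : 1 < κ) (δ lam : ℝ) (hδ : 0 < δ) (r s f : ι → ℝ)
    (hsch : ∀ K : ι, (r K - s K) / δ +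
            ∑ L ∈ univ.erase K, e K L / vol K *
              (max (u K L) 0 * r K - max (-u K L) 0 * r L) = f K)
    (hlam : ∀ K, -(lam * vol K) ≤ δ * ∑ L, e K L * u K L) (hlam0 : 0 ≤ lam)
    (hlk : (p-1)/p * lam ≤ (κ-1)/κ) :
    wn vol p r ≤ Real.exp (κ * lam) * (wn vol p s + δ * wn vol p f) := by
  have hp0 : 0 < p := by linarith
  have hκ0 : 0 < κ := by linarith
  have h := step_ineq vol hvol e u he hu p hp δ lam hδ r s f hsch hlam
  have hf := holder_ph vol hvol p hp (fun K => s K + δ * f K) r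
  have hY := wn_add vol hvol p hp s (fun K => δ * f K)
  rw [wn_smul vol hvol p hp δ hδ] at hY
  have hD : 0 ≤ ∑ K, ∑ L, e K L * max (u K L) 0 * bd p (r K) (r L) :=
    sum_nonneg fun K _ => sum_nonneg fun L _ =>
      mul_nonneg (mul_nonneg (he0 K L) (le_max_right _ _)) (bd_nonneg p hp hp2 _ _)
  have hD := mul_nonneg hδ.le hD
  have hdec : ∑ K, vol K * ((r K - s K - δ * f K) * (p * |r K|^(p-2) * r K)) =
      p * (wn vol p r) ^ p - ∑ K, vol K * ((s K + δ * f K) * (p * |r K|^(p-2) * r K)) := by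
    rw [wn_pow vol hvol p hp, mul_sum, ← sum_sub_distrib]
    refine sum_congr rfl fun K _ => ?_
    linear_combination vol K * ph_mul p (r K) hp
  rw [hdec, ← wn_pow vol hvol p hp] at h
  have hX := wn_nonneg vol hvol p r
  have hs := wn_nonneg vol hvol p s
  have hff := wn_nonneg vol hvol p f
  set X := wn vol p r
  set Y := wn vol p (fun K => s K + δ * f K)
  rcases eq_or_lt_of_le hX with h0 | hXpos
  · rw [← h0]; positivity
  have hXp : X ^ p = X * X ^ (p-1) := by
    rw [mul_comm, ← Real.rpow_add_one hXpos.ne']; congr 1; ring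
  have hpos : 0 < X ^ (p-1) := Real.rpow_pos_of_pos hXpos _
  set x := (p-1)/p * lam with hx
  have hx1 : p * x = (p-1) * lam := by rw [hx]; field_simp
  have h5 : p * X ^ (p-1) * (X * (1-x)) ≤ p * X ^ (p-1) * Y := by
    have : (p-1) * lam * X^p = p * x * X^p := by rw [hx1]
    rw [this, hXp] at h
    linarith
  have h6 : X * (1-x) ≤ Y := le_of_mul_le_mul_left h5 (by positivity)
  have hx0 : 0 ≤ x := by rw [hx]; exact mul_nonneg (div_nonneg (by linarith) hp0.le) hlam0
  have hxl : x ≤ lam := by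
    have : (p-1)/p ≤ 1 := by rw [div_le_one hp0]; linarith
    nlinarith
  have h1x : 1 ≤ κ * (1 - x) := by
    have : κ * x ≤ κ * ((κ-1)/κ) := mul_le_mul_of_nonneg_left hlk hκ0.le
    rw [mul_div_cancel₀ _ hκ0.ne'] at this
    linarith
  -- 1 ≤ exp (κ x) (1-x)
  have h7 : 1 ≤ Real.exp (κ * lam) * (1-x) := by
    have a1 := Real.add_one_le_exp (κ * x)
    have a2 : Real.exp (κ * x) ≤ Real.exp (κ * lam) := Real.exp_le_exp.2 (by nlinarith)
    have a3 : 0 < 1 - x := by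
      by_contra hh
      nlinarith
    nlinarith
  calc X ≤ X * (Real.exp (κ * lam) * (1-x)) := le_mul_of_one_le_right hX h7
    _ = Real.exp (κ * lam) * (X * (1-x)) := by ring
    _ ≤ _ := mul_le_mul_of_nonneg_left (h6.trans hY) (Real.exp_pos _).le

/-- the constant, in terms of `ℓ = log Λ` and the `ℓ^p` bounds -/
noncomputable def bvM (κ ℓ A B : ℝ) : ℝ := Real.exp (κ * ℓ) * (A + B)

noncomputable def bvE (p κ ℓ A B : ℝ) : ℝ :=
  A ^ p + (p-1) * ℓ * (bvM κ ℓ A B) ^ p + p * (B * (bvM κ ℓ A B) ^ (p-1))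

noncomputable def bvC (p κ ℓ C₀ V A B : ℝ) : ℝ :=
  2 * (bvE p κ ℓ A B + 2 / (p * (p-1)) * (C₀ * (V + 2 * (bvM κ ℓ A B) ^ p)))

lemma sum_abs_flux {ι : Type} [Fintype ι] [DecidableEq ι]
    (e u : ι → ι → ℝ) (he : ∀ K L, e K L = e L K) (hu : ∀ K L, u K L = - u L K) (r : ι → ℝ) :
    ∑ K, ∑ L ∈ univ.erase K, e K L * |u K L| * |r K - r L| =
      2 * ∑ K, ∑ L, e K L * max (u K L) 0 * |r K - r L| := by
  have h1 : ∑ K, ∑ L ∈ univ.erase K, e K L * |u K L| * |r K - r L| =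
      ∑ K, ∑ L, e K L * max (u K L) 0 * |r K - r L| +
      ∑ K, ∑ L, e K L * max (-u K L) 0 * |r K - r L| := by
    rw [← sum_add_distrib]
    refine sum_congr rfl fun K _ => ?_
    rw [erase_full K _ (by simp), ← sum_add_distrib]
    refine sum_congr rfl fun L _ => ?_
    have : |u K L| = max (u K L) 0 + max (-u K L) 0 := by
      rcases le_total 0 (u K L) with h | h
      · rw [max_eq_left h, max_eq_right (by linarith), abs_of_nonneg h]; ring
      · rw [max_eq_right h, max_eq_left (by linarith), abs_of_nonpos h]; ring
    rw [this]; ring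
  have h2 : ∑ K, ∑ L, e K L * max (-u K L) 0 * |r K - r L| =
      ∑ K, ∑ L, e K L * max (u K L) 0 * |r K - r L| := by
    rw [sum_comm]
    refine sum_congr rfl fun K _ => sum_congr rfl fun L _ => ?_
    rw [he L K, hu L K, neg_neg, abs_sub_comm]
  rw [h1, h2]; ring

lemma weight_bound {ι : Type} [Fintype ι] [DecidableEq ι] (vol : ι → ℝ)
    (e u : ι → ι → ℝ) (he : ∀ K L, e K L = e L K) (he0 : ∀ K L, 0 ≤ e K L)
    (hu : ∀ K L, u K L = - u L K) (h U C₀ : ℝ) (hU : 0 < U)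
    (hUb : ∀ K L, |u K L| ≤ U) (hreg : ∀ K, ∑ L ∈ univ.erase K, e K L ≤ C₀ * vol K / h)
    (w : ι → ℝ) (hw : ∀ K, 0 ≤ w K) :
    ∑ K, ∑ L, e K L * max (u K L) 0 * (1 + w K + w L) ≤
      U / h * (C₀ * (∑ K, vol K + 2 * ∑ K, vol K * w K)) := by
  have huu : ∀ K, u K K = 0 := fun K => by linarith [hu K K]
  let e' : ι → ι → ℝ := fun K L => if L = K then 0 else e K L
  have he' : ∀ K L, e' K L = e' L K := by
    intro K L; simp only [e', eq_comm (a := L) (b := K), he K L]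
  have hsum : ∀ K, ∑ L, e' K L = ∑ L ∈ univ.erase K, e K L := by
    intro K
    rw [← erase_full K (fun L => e' K L) (by simp [e'])]
    refine sum_congr rfl fun L hL => ?_
    simp only [e', if_neg (ne_of_mem_erase hL)]
  have h1 : ∑ K, ∑ L, e K L * max (u K L) 0 * (1 + w K + w L) ≤
      ∑ K, ∑ L, U * (e' K L * (1 + w K + w L)) := by
    refine sum_le_sum fun K _ => sum_le_sum fun L _ => ?_
    by_cases hKL : L = K
    · subst hKL; simp [huu, e']
    · simp only [e', if_neg hKL]
      have a1 : max (u K L) 0 ≤ U := max_le ((le_abs_self _).trans (hUb K L)) hU.le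
      have a2 : 0 ≤ e K L * (1 + w K + w L) :=
        mul_nonneg (he0 K L) (by linarith [hw K, hw L])
      nlinarith
  refine h1.trans ?_
  have h2 : ∑ K, ∑ L, U * (e' K L * (1 + w K + w L)) =
      U * ∑ K, (∑ L, e' K L) * (1 + 2 * w K) := by
    have b1 : ∑ K, ∑ L, e' K L * w L = ∑ K, (∑ L, e' K L) * w K := by
      rw [sum_comm]
      refine sum_congr rfl fun K _ => ?_
      rw [sum_mul]
      exact sum_congr rfl fun L _ => by rw [he' L K]
    have b2 : ∑ K, ∑ L, U * (e' K L * (1 + w K + w L)) =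
       U * (∑ K, (∑ L, e' K L) * (1 + w K) + ∑ K, ∑ L, e' K L * w L) := by
      rw [← sum_add_distrib, mul_sum]
      refine sum_congr rfl fun K _ => ?_
      rw [sum_mul, ← sum_add_distrib, mul_sum]
      exact sum_congr rfl fun L _ => by ring
    rw [b2, b1, ← sum_add_distrib]
    congr 1
    exact sum_congr rfl fun L _ => by ring
  have h3 : ∑ K, (∑ L, e' K L) * (1 + 2 * w K) ≤ ∑ K, (C₀ * vol K / h) * (1 + 2 * w K) := by
    refine sum_le_sum fun K _ => ?_
    rw [hsum]
    exact mul_le_mul_of_nonneg_right (hreg K) (by linarith [hw K])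
  rw [h2]
  refine (mul_le_mul_of_nonneg_left h3 hU.le).trans (le_of_eq ?_)
  have : ∑ K, (C₀ * vol K / h) * (1 + 2 * w K) =
      (1/h) * (C₀ * (∑ K, vol K + 2 * ∑ K, vol K * w K)) := by
    rw [mul_sum, ← sum_add_distrib, mul_sum, mul_sum]
    exact sum_congr rfl fun L _ => by ring
  rw [this]; ring

lemma bv_core (p κ : ℝ) (hp : 1 < p) (hp2 : p ≤ 2) (hκ : 1 < κ)
    (ι : Type) [Fintype ι] [DecidableEq ι]
    (vol : ι → ℝ) (hvol : ∀ K, 0 < vol K)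
    (e : ι → ι → ℝ) (he : ∀ K L, e K L = e L K) (he0 : ∀ K L, 0 ≤ e K L)
    (u : ℕ → ι → ι → ℝ) (hu : ∀ n K L, u n K L = - u n L K)
    (δ h U C₀ : ℝ) (hδ : 0 < δ) (hh : 0 < h) (hU : 0 < U) (hC₀ : 0 < C₀)
    (hUb : ∀ n K L, |u n K L| ≤ U)
    (hreg : ∀ K, ∑ L ∈ univ.erase K, e K L ≤ C₀ * vol K / h)
    (N : ℕ) (ρ f : ℕ → ι → ℝ)
    (hsch : ∀ n < N, ∀ K : ι,
          (ρ (n+1) K - ρ n K) / δ +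
            ∑ L ∈ univ.erase K, e K L / vol K *
              (max (u n K L) 0 * ρ (n+1) K - max (-u n K L) 0 * ρ (n+1) L) = f n K)
    (lam : ℕ → ℝ) (hlam0 : ∀ n, 0 ≤ lam n)
    (hlam : ∀ n K, -(lam n * vol K) ≤ δ * ∑ L, e K L * u n K L)
    (hlk : ∀ n < N, (p-1)/p * lam n ≤ (κ-1)/κ)
    (A B : ℝ) (hA : wn vol p (ρ 0) ≤ A) (hB : ∑ n ∈ range N, δ * wn vol p (f n) ≤ B) :
    δ * ∑ n ∈ range N, ∑ K, ∑ L ∈ univ.erase K,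
          e K L * |u n K L| * |ρ (n+1) K - ρ (n+1) L| ≤
      bvC p κ (∑ n ∈ range N, lam n) C₀ (∑ K, vol K) A B * Real.sqrt ((N * δ) * U / h) := by
  rcases Nat.eq_zero_or_pos N with hN | hN
  · subst hN; simp
  have hp0 : 0 < p := by linarith
  have hp1 : 0 < p - 1 := by linarith
  have hκ0 : 0 < κ := by linarith
  set ℓ := ∑ n ∈ range N, lam n with hℓ
  set M := bvM κ ℓ A B with hM
  have hwf : ∀ n, 0 ≤ δ * wn vol p (f n) := fun n => mul_nonneg hδ.le (wn_nonneg vol hvol p _)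
  -- stability
  have stab : ∀ n ≤ N, wn vol p (ρ n) ≤ Real.exp (κ * ∑ m ∈ range n, lam m) *
      (wn vol p (ρ 0) + ∑ m ∈ range n, δ * wn vol p (f m)) := by
    intro n
    induction n with
    | zero => intro _; simp
    | succ n ih =>
      intro hn
      have ih := ih (by omega)
      have hs := step_stab vol hvol e (u n) he he0 (hu n) p κ hp hp2 hκ δ (lam n) hδ
        (ρ (n+1)) (ρ n) (f n) (hsch n (by omega)) (hlam n) (hlam0 n) (hlk n (by omega))
      rw [sum_range_succ, sum_range_succ, mul_add κ, Real.exp_add]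
      have hE : 1 ≤ Real.exp (κ * ∑ m ∈ range n, lam m) :=
        Real.one_le_exp (mul_nonneg hκ0.le (sum_nonneg fun m _ => hlam0 m))
      have h1 : wn vol p (ρ n) + δ * wn vol p (f n) ≤ Real.exp (κ * ∑ m ∈ range n, lam m) *
         (wn vol p (ρ 0) + (∑ m ∈ range n, δ * wn vol p (f m) + δ * wn vol p (f n))) := by
        have := le_mul_of_one_le_left (hwf n) hE
        linarith
      have h2 := mul_le_mul_of_nonneg_left h1 (Real.exp_pos (κ * lam n)).le
      linarith
  have hMb : ∀ n ≤ N, wn vol p (ρ n) ≤ M := by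
    intro n hn
    refine (stab n hn).trans ?_
    have hsub : range n ⊆ range N := range_subset_range.2 hn
    have a1 : ∑ m ∈ range n, lam m ≤ ℓ :=
      sum_le_sum_of_subset_of_nonneg hsub fun m _ _ => hlam0 m
    have a2 : ∑ m ∈ range n, δ * wn vol p (f m) ≤ ∑ m ∈ range N, δ * wn vol p (f m) :=
      sum_le_sum_of_subset_of_nonneg hsub fun m _ _ => hwf m
    rw [hM, bvM]
    refine mul_le_mul (Real.exp_le_exp.2 (mul_le_mul_of_nonneg_left a1 hκ0.le)) (by linarith)
      (add_nonneg (wn_nonneg vol hvol p _) (sum_nonneg fun m _ => hwf m)) (Real.exp_pos _).le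
  have hM0 : 0 ≤ M := (wn_nonneg vol hvol p _).trans (hMb 0 (by omega))
  have hMp : ∀ n ≤ N, wn vol p (ρ n) ^ p ≤ M ^ p := fun n hn =>
    Real.rpow_le_rpow (wn_nonneg vol hvol p _) (hMb n hn) hp0.le
  have hMp1 : ∀ n ≤ N, wn vol p (ρ n) ^ (p-1) ≤ M ^ (p-1) := fun n hn =>
    Real.rpow_le_rpow (wn_nonneg vol hvol p _) (hMb n hn) hp1.le
  have hMpn : 0 ≤ M ^ (p-1) := Real.rpow_nonneg hM0 _
  -- dissipation
  let Di : ℕ → ℝ := fun n => ∑ K, ∑ L, e K L * max (u n K L) 0 * bd p (ρ (n+1) K) (ρ (n+1) L)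
  have hdiss : δ * ∑ n ∈ range N, Di n ≤ bvE p κ ℓ A B := by
    have a1 : ∑ n ∈ range N, (wn vol p (ρ (n+1)) ^ p - wn vol p (ρ n) ^ p + δ * Di n) ≤
        ∑ n ∈ range N, ((p-1) * M ^ p * lam n + p * M ^ (p-1) * (δ * wn vol p (f n))) := by
      refine sum_le_sum fun n hn => ?_
      have hn := mem_range.1 hn
      have hs := step_energy vol hvol e (u n) he (hu n) p hp hp2 δ (lam n) hδ
        (ρ (n+1)) (ρ n) (f n) (hsch n hn) (hlam n)
      have b1 := mul_le_mul_of_nonneg_left (hMp (n+1) (by omega))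
        (mul_nonneg hp1.le (hlam0 n))
      have b2 := mul_le_mul_of_nonneg_left (hMp1 (n+1) (by omega))
        (mul_nonneg hp0.le (hwf n))
      simp only [Di]
      linarith
    rw [sum_add_distrib, sum_add_distrib, sum_range_sub (fun n => wn vol p (ρ n) ^ p),
      ← mul_sum, ← mul_sum, ← mul_sum] at a1
    have a2 : wn vol p (ρ 0) ^ p ≤ A ^ p :=
      Real.rpow_le_rpow (wn_nonneg vol hvol p _) hA hp0.le
    have a3 : 0 ≤ wn vol p (ρ N) ^ p := Real.rpow_nonneg (wn_nonneg vol hvol p _) _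
    have a4 := mul_le_mul_of_nonneg_left hB (mul_nonneg hp0.le hMpn)
    rw [bvE, ← hM]
    linarith
  -- conclusion
  set Q := (N * δ) * U / h with hQ
  have hNpos : (0:ℝ) < N := by exact_mod_cast hN
  have hQ0 : 0 < Q := by positivity
  set t := Real.sqrt Q with ht
  have ht0 : 0 < t := Real.sqrt_pos.2 hQ0
  have htt : Q = t * t := (Real.mul_self_sqrt hQ0.le).symm
  set c := 2 / (p * (p-1)) with hc
  have hc0 : 0 < c := by positivity
  set V := ∑ K, vol K with hV
  have hstep : ∀ n ∈ range N, ∑ K, ∑ L ∈ univ.erase K,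
      e K L * |u n K L| * |ρ (n+1) K - ρ (n+1) L| ≤
      2 * (t * Di n + c / t * (U / h * (C₀ * (V + 2 * M ^ p)))) := by
    intro n hn
    have hn := mem_range.1 hn
    rw [sum_abs_flux e (u n) he (hu n)]
    have a1 : ∑ K, ∑ L, e K L * max (u n K L) 0 * |ρ (n+1) K - ρ (n+1) L| ≤
        t * Di n + c / t * ∑ K, ∑ L, e K L * max (u n K L) 0 *
          (1 + |ρ (n+1) K| ^ p + |ρ (n+1) L| ^ p) := by
      simp only [Di]
      rw [mul_sum, mul_sum, ← sum_add_distrib]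
      refine sum_le_sum fun K _ => ?_
      rw [mul_sum, mul_sum, ← sum_add_distrib]
      refine sum_le_sum fun L _ => ?_
      have b := mul_le_mul_of_nonneg_left (bregman_young p hp hp2 (ρ (n+1) K) (ρ (n+1) L) t ht0)
        (mul_nonneg (he0 K L) (le_max_right (u n K L) 0))
      refine b.trans (le_of_eq ?_)
      rw [bd, ← hc]
      ring
    have a2 := weight_bound vol e (u n) he he0 (hu n) h U C₀ hU (hUb n) hreg
      (fun K => |ρ (n+1) K| ^ p) (fun K => Real.rpow_nonneg (abs_nonneg _) _)
    rw [← wn_pow vol hvol p hp] at a2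
    have a3 : U / h * (C₀ * (V + 2 * wn vol p (ρ (n+1)) ^ p)) ≤
        U / h * (C₀ * (V + 2 * M ^ p)) := by
      have := hMp (n+1) (by omega)
      gcongr
    have a4 := mul_le_mul_of_nonneg_left (a2.trans a3) (div_nonneg hc0.le ht0.le)
    linarith
  have hfin := mul_le_mul_of_nonneg_left (sum_le_sum hstep) hδ.le
  refine hfin.trans ?_
  rw [← mul_sum, sum_add_distrib, ← mul_sum, sum_const, card_range, nsmul_eq_mul]
  have e1 : δ * (2 * (t * ∑ n ∈ range N, Di n + N * (c / t * (U / h * (C₀ * (V + 2 * M ^ p))))))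
      = 2 * (t * (δ * ∑ n ∈ range N, Di n) + (c * (C₀ * (V + 2 * M ^ p))) * (Q / t)) := by
    rw [hQ]; ring
  have e2 : Q / t = t := by rw [htt]; field_simp
  rw [e1, e2, bvC, ← hM, ← hc]
  have := mul_le_mul_of_nonneg_left hdiss ht0.le
  linarith

/-- **Spatial weak BV estimate for the implicit upwind scheme.**
For `q ∈ (1,∞)` and `κ > 1` there is a constant `C` — a function of `Λ`, `C₀`,
`∑_K |K|`, `‖ρ⁰‖_{ℓ^q}` and `∑ₙ δ‖fⁿ‖_{ℓ^q}` only — such that, in any discrete upwind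
setting with `N` time steps, time step `δ > 0`, mesh size `h > 0`, flux bound
`|uⁿ_{KL}| ≤ U`, mesh regularity `∑_{L≠K} |K∣L| ≤ C₀ |K|/h`,
`λⁿ := δ · max_K ((div uⁿ)_K)⁻` with `((q−1)/q) λⁿ ≤ (κ−1)/κ` for all `n < N`, and
arbitrary data, one has
`δ ∑ₙ ∑_K ∑_{L≠K} |K∣L| |uⁿ_{KL}| |ρⁿ⁺¹_K − ρⁿ⁺¹_L| ≤ C √(T U / h)` with `T := N δ`. -/
theorem upwind_spatial_weak_BV (q κ : ℝ) (hq : 1 < q) (hκ : 1 < κ) :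
    ∃ C : ℝ → ℝ → ℝ → ℝ → ℝ → ℝ,
      ∀ (ι : Type) [Fintype ι] [Nonempty ι] [DecidableEq ι]
        (vol : ι → ℝ), (∀ K, 0 < vol K) →
      ∀ (edge : ι → ι → ℝ), (∀ K L, edge K L = edge L K) → (∀ K L, 0 ≤ edge K L) →
      ∀ (u : ℕ → ι → ι → ℝ), (∀ n K L, u n K L = - u n L K) →
        (∀ n K L, edge K L = 0 → u n K L = 0) →
      ∀ (δ h U C₀ : ℝ), 0 < δ → 0 < h → 0 < U → 0 < C₀ →
        (∀ n K L, |u n K L| ≤ U) →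
        (∀ K, ∑ L ∈ univ.erase K, edge K L ≤ C₀ * vol K / h) →
      ∀ (N : ℕ) (ρ f : ℕ → ι → ℝ),
        (∀ n < N, ∀ K : ι,
          (ρ (n+1) K - ρ n K) / δ +
            ∑ L ∈ univ.erase K, edge K L / vol K *
              (max (u n K L) 0 * ρ (n+1) K - max (-u n K L) 0 * ρ (n+1) L) = f n K) →
      ∀ (lam : ℕ → ℝ),
        (∀ n, lam n = δ * univ.sup' univ_nonempty
          (fun K => max (-((∑ L ∈ univ.erase K, edge K L * u n K L) / vol K)) 0)) →
        (∀ n < N, (q - 1)/q * lam n ≤ (κ - 1)/κ) →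
      δ * ∑ n ∈ Finset.range N, ∑ K, ∑ L ∈ univ.erase K,
          edge K L * |u n K L| * |ρ (n+1) K - ρ (n+1) L| ≤
        C (Real.exp (∑ n ∈ Finset.range N, lam n)) C₀ (∑ K, vol K)
            ((∑ K, vol K * |ρ 0 K| ^ q) ^ (1/q))
            (∑ n ∈ Finset.range N, δ * (∑ K, vol K * |f n K| ^ q) ^ (1/q)) *
          Real.sqrt ((N * δ) * U / h) := by
  set p := min q 2 with hpdef
  have hp : 1 < p := lt_min hq (by norm_num)
  have hp2 : p ≤ 2 := min_le_right _ _
  have hpq : p ≤ q := min_le_left _ _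
  refine ⟨fun Λ C₀ V A B => bvC p κ (Real.log Λ) C₀ V (V ^ (1/p - 1/q) * A)
    (V ^ (1/p - 1/q) * B), ?_⟩
  intro ι _ _ _ vol hvol e he he0 u hu _ δ h U C₀ hδ hh hU hC₀ hUb hreg N ρ f hsch lam hlam hlk
  have hlb : ∀ n K, δ * max (-((∑ L ∈ univ.erase K, e K L * u n K L) / vol K)) 0 ≤ lam n := by
    intro n K
    rw [hlam n]
    refine mul_le_mul_of_nonneg_left ?_ hδ.le
    exact le_sup' (fun K => max (-((∑ L ∈ univ.erase K, e K L * u n K L) / vol K)) 0) (mem_univ K)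
  have hlam0 : ∀ n, 0 ≤ lam n := by
    intro n
    obtain ⟨K⟩ := (inferInstance : Nonempty ι)
    exact (mul_nonneg hδ.le (le_max_right _ _)).trans (hlb n K)
  have hlam1 : ∀ n K, -(lam n * vol K) ≤ δ * ∑ L, e K L * u n K L := by
    intro n K
    have h1 := (mul_le_mul_of_nonneg_left (le_max_left _ _) hδ.le).trans (hlb n K)
    have h2 := mul_le_mul_of_nonneg_right h1 (hvol K).le
    have huu : u n K K = 0 := by linarith [hu n K K]
    rw [erase_full K _ (by simp [huu])] at h2
    have h3 : δ * -((∑ L, e K L * u n K L) / vol K) * vol K = -(δ * ∑ L, e K L * u n K L) := by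
      have := (hvol K).ne'
      field_simp
    rw [h3] at h2
    linarith
  have hlk' : ∀ n < N, (p-1)/p * lam n ≤ (κ-1)/κ := by
    intro n hn
    refine le_trans (mul_le_mul_of_nonneg_right ?_ (hlam0 n)) (hlk n hn)
    rw [div_le_div_iff₀ (by linarith) (by linarith)]
    nlinarith
  have hA := wn_le vol hvol p q hp hpq (ρ 0)
  have hB : ∑ n ∈ range N, δ * wn vol p (f n) ≤
      (∑ K, vol K) ^ (1/p - 1/q) * ∑ n ∈ range N, δ * wn vol q (f n) := by
    rw [mul_sum]
    refine sum_le_sum fun n _ => ?_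
    have := mul_le_mul_of_nonneg_left (wn_le vol hvol p q hp hpq (f n)) hδ.le
    linarith
  have := bv_core p κ hp hp2 hκ ι vol hvol e he he0 u hu δ h U C₀ hδ hh hU hC₀ hUb hreg N ρ f hsch
    lam hlam0 hlam1 hlk' _ _ hA hB
  simp only [Real.log_exp]
  exact this
end
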